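/- Let X be a finite set with n ≥ 2 elements, and let S = (P(X), ∩) be the power set of X regarded as a commutative semigroup under intersection, with zero element ∅. Then χ(Γ(S)) = ω(Γ(S)) = n. -/

import Mathlib

/-- A commutative semigroup with a zero element. -/
class CommSemigroupWithZero (S : Type*) extends SemigroupWithZero S where
  mul_comm : ∀ a b : S, a * b = b * a

variable (S : Type*) [CommSemigroupWithZero S]

/-- The set of zero-divisors of `S`. -/
def zdivs : Set S := {x | ∃ y, y ≠ 0 ∧ x * y = 0}

/-- The vertex set `Z(S)* = Z(S) \ {0}` of the zero-divisor graph. -/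
def zdVerts : Set S := {x | x ≠ 0 ∧ x ∈ zdivs S}

/-- The zero-divisor graph `Γ(S)`. -/
def zdGraph : SimpleGraph (zdVerts S) where
  Adj x y := x ≠ y ∧ (x : S) * y = 0
  symm := by
    refine ⟨?_⟩
    rintro x y ⟨hne, h⟩
    exact ⟨hne.symm, by rw [CommSemigroupWithZero.mul_comm]; exact h⟩
  loopless := ⟨fun x h => h.1 rfl⟩

/-- `I` is an ideal of the semigroup `S`. -/
def IsIdeal (I : Set S) : Prop := I.Nonempty ∧ ∀ x ∈ I, ∀ s : S, x * s ∈ I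

/-- `p` is a prime ideal of the semigroup `S`. -/
def IsPrimeIdeal (p : Set S) : Prop :=
  IsIdeal S p ∧ ∀ x y : S, (∀ s : S, x * s * y ∈ p) → x ∈ p ∨ y ∈ p

/-- `x` is nilpotent: `x ^ (n + 1) = 0` for some `n`. -/
def IsNil (x : S) : Prop := ∃ n : ℕ, (fun y => x * y)^[n] x = 0

/-- The annihilator of `a`. -/
def Ann (a : S) : Set S := {s | s * a = 0}

/-- The set of associated primes of `S`. -/
def Ass : Set (Set S) := {p | IsPrimeIdeal S p ∧ ∃ x : S, p = Ann S x}


/-- The power set of `X`, regarded as a commutative semigroup under intersection,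
with zero element `∅`. -/
instance powerSetSemigroup (X : Type*) : CommSemigroupWithZero (Set X) where
  mul a b := a ∩ b
  mul_assoc := Set.inter_assoc
  zero := ∅
  zero_mul := Set.empty_inter
  mul_zero := Set.inter_empty
  mul_comm := Set.inter_comm

/-!
For each `a : X` the subsets avoiding `a` form a prime ideal of `(P(X), ∩)`, and these ideals
intersect in `{∅}`. So every vertex lies outside the ideal of some `a`, which may serve as its
color: two elements outside a prime ideal have nonzero product, hence are not adjacent. Conversely
the singletons are pairwise adjacent. A coloring by `X` and a clique indexed by `X` determine both
invariants.
-/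

section CliquesAndColorings

variable {V ι : Type*} {G : SimpleGraph V}

theorem encard_le_enatCard_of_isClique_of_coloring {s : Set V} (hs : G.IsClique s)
    (C : G.Coloring ι) : s.encard ≤ ENat.card ι := by
  have hC : Set.InjOn C s := fun v hv w hw hvw => by
    by_contra hne
    exact C.valid (hs hv hw hne) hvw
  exact hC.encard_image ▸ Set.encard_le_card

theorem exists_isClique_encard_eq_of_top_hom (K : (⊤ : SimpleGraph ι) →g G) :
    ∃ s : Set V, G.IsClique s ∧ s.encard = ENat.card ι := by
  have hK : Function.Injective K := K.injective_of_top_hom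
  exact ⟨Set.range K, SimpleGraph.isClique_range_copy_top ⟨K, hK⟩,
    by rw [← Set.image_univ, hK.encard_image, Set.encard_univ]⟩

theorem chromaticNumber_eq_enatCard_of_top_hom_of_coloring (K : (⊤ : SimpleGraph ι) →g G)
    (C : G.Coloring ι) : G.chromaticNumber = ENat.card ι := by
  rw [← SimpleGraph.chromaticNumber_top_eq_enat_card]
  exact le_antisymm (SimpleGraph.chromaticNumber_mono_of_hom C)
    (SimpleGraph.chromaticNumber_mono_of_hom K)

end CliquesAndColorings

section ZeroDivisorGraph

variable {S} {ι : Type*}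

theorem IsIdeal.zero_mem {I : Set S} (hI : IsIdeal S I) : (0 : S) ∈ I := by
  obtain ⟨x, hx⟩ := hI.1
  simpa only [mul_zero] using hI.2 x hx 0

theorem IsPrimeIdeal.mem_or_mem_of_mul_eq_zero {p : Set S} (hp : IsPrimeIdeal S p) {x y : S}
    (hxy : x * y = 0) : x ∈ p ∨ y ∈ p := by
  refine hp.2 x y fun s => ?_
  have hzero : x * s * y = 0 := by
    rw [mul_assoc, CommSemigroupWithZero.mul_comm s y, ← mul_assoc, hxy, zero_mul]
  exact hzero ▸ hp.1.zero_mem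

theorem nonempty_zdGraph_coloring_of_iInter_subset {p : ι → Set S}
    (hp : ∀ i, IsPrimeIdeal S (p i)) (hzero : ⋂ i, p i ⊆ {0}) :
    Nonempty ((zdGraph S).Coloring ι) := by
  have exists_notMem (x : zdVerts S) : ∃ i, (x : S) ∉ p i := by
    by_contra! hx
    exact x.2.1 (hzero (Set.mem_iInter.2 hx))
  choose color hcolor using exists_notMem
  refine ⟨SimpleGraph.Coloring.mk color fun {x y} hxy heq => ?_⟩
  obtain hx | hy := (hp (color x)).mem_or_mem_of_mul_eq_zero hxy.2
  · exact hcolor x hx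
  · exact hcolor y (heq ▸ hy)

theorem nonempty_top_hom_zdGraph_of_pairwise_mul_eq_zero [Nontrivial ι] {e : ι → S}
    (hinj : Function.Injective e) (hne : ∀ i, e i ≠ 0) (hmul : Pairwise fun i j => e i * e j = 0) :
    Nonempty ((⊤ : SimpleGraph ι) →g zdGraph S) := by
  have mem_zdVerts (i : ι) : e i ∈ zdVerts S := by
    obtain ⟨j, hji⟩ := exists_ne i
    exact ⟨hne i, e j, hne j, hmul hji.symm⟩
  exact ⟨fun i => ⟨e i, mem_zdVerts i⟩, fun hij =>
    ⟨fun h => hij (hinj (congrArg Subtype.val h)), hmul hij⟩⟩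

end ZeroDivisorGraph

section PowerSet

variable {X : Type*}

theorem isPrimeIdeal_setOf_notMem (a : X) : IsPrimeIdeal (Set X) {s | a ∉ s} := by
  refine ⟨⟨⟨∅, Set.notMem_empty a⟩, fun s hs t hst => hs hst.1⟩, fun s t hst => ?_⟩
  by_contra! hmem
  have hs : a ∈ s := not_not.1 hmem.1
  have ht : a ∈ t := not_not.1 hmem.2
  exact hst Set.univ ⟨⟨hs, Set.mem_univ a⟩, ht⟩

theorem iInter_setOf_notMem_subset : ⋂ a : X, {s : Set X | a ∉ s} ⊆ {0} :=
  fun _ hs => Set.eq_empty_of_forall_notMem (Set.mem_iInter.1 hs)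

theorem pairwise_singleton_mul_eq_zero :
    Pairwise fun a b : X => ({a} * {b} : Set X) = 0 :=
  fun _ _ hab => Set.singleton_inter_eq_empty.2 hab

end PowerSet

theorem powerset_chromatic_eq_clique_eq_card_general (X : Type*) [Nontrivial X] :
    (zdGraph (Set X)).chromaticNumber = ENat.card X ∧
      (∃ T : Set (zdVerts (Set X)), (zdGraph (Set X)).IsClique T ∧ T.encard = ENat.card X) ∧
      (∀ T : Set (zdVerts (Set X)), (zdGraph (Set X)).IsClique T → T.encard ≤ ENat.card X) := by
  obtain ⟨C⟩ := nonempty_zdGraph_coloring_of_iInter_subset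
    (isPrimeIdeal_setOf_notMem (X := X)) iInter_setOf_notMem_subset
  obtain ⟨K⟩ := nonempty_top_hom_zdGraph_of_pairwise_mul_eq_zero
    Set.singleton_injective Set.singleton_ne_empty (pairwise_singleton_mul_eq_zero (X := X))
  exact ⟨chromaticNumber_eq_enatCard_of_top_hom_of_coloring K C,
    exists_isClique_encard_eq_of_top_hom K,
    fun _ hT => encard_le_enatCard_of_isClique_of_coloring hT C⟩

/-- For a finite set `X` with `n ≥ 2` elements and
`S = (P(X), ∩)`, we have `χ(Γ(S)) = ω(Γ(S)) = n` (the clique number equals `n`: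
there is a clique of size `n` and every clique has at most `n` vertices). -/
theorem powerset_chromatic_eq_clique_eq_card (X : Type*) [Fintype X]
    (n : ℕ) (hn : 2 ≤ n) (hcard : Fintype.card X = n) :
    (zdGraph (Set X)).chromaticNumber = n ∧
      (∃ T : Finset (zdVerts (Set X)), (zdGraph (Set X)).IsNClique n T) ∧
      (∀ T : Finset (zdVerts (Set X)), (zdGraph (Set X)).IsClique ↑T → T.card ≤ n) := by
  have : Nontrivial X := Fintype.one_lt_card_iff_nontrivial.1 (by lia)
  have hX : ENat.card X = n := by rw [ENat.card_eq_coe_fintype_card, hcard]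
  obtain ⟨hχ, ⟨T, hT, hTcard⟩, hω⟩ := powerset_chromatic_eq_clique_eq_card_general X
  simp only [hX] at hχ hTcard hω
  obtain ⟨T, rfl⟩ := (Set.finite_of_encard_eq_coe hTcard).exists_finset_coe
  exact ⟨hχ, ⟨T, hT, by simpa using hTcard⟩, fun U hU => by simpa using hω U hU⟩
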